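/- arXiv:1305.5816 — 3 statements merged into one kernel-verified Lean document; each statement's English description precedes it below -/
import Mathlib

section
/- Let f : ℝ → ℂ be a Schwartz function and let F be its Cauchy transform. Then for every x ∈ ℝ, the jump of F across the real axis recovers f: lim_{ε → 0⁺} ( F(x + iε) − F(x − iε) ) = f(x). -/
open MeasureTheory Complex Filter Topology

/-- The Cauchy transform of a function `f : ℝ → ℂ`. -/
noncomputable def cauchyTransform (f : ℝ → ℂ) (k : ℂ) : ℂ :=
  (1 / (2 * Real.pi * Complex.I)) * ∫ s : ℝ, f s / ((s : ℂ) - k)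

/-!
The jump of the Cauchy kernel across the real axis is the Poisson kernel of the upper half-plane,
`1 / (s - (x + iε)) - 1 / (s - (x - iε)) = 2πi · π⁻¹ ε / ((s - x)² + ε²)`,
which is the density of the Cauchy distribution with location `x` and scale `ε`. These densities
form an approximate identity at `x` as `ε → 0⁺`.
-/

open ProbabilityTheory Bornology
open scoped NNReal

section CauchyKernel

variable {f : ℝ → ℂ}

theorem norm_inv_ofReal_sub_le (s : ℝ) {k : ℂ} (hk : k.im ≠ 0) :
    ‖((s : ℂ) - k)⁻¹‖ ≤ |k.im|⁻¹ := by
  rw [norm_inv]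
  refine inv_anti₀ (abs_pos.mpr hk) ?_
  simpa using abs_im_le_norm ((s : ℂ) - k)

theorem integrable_div_ofReal_sub {μ : Measure ℝ} (hf : Integrable f μ) {k : ℂ} (hk : k.im ≠ 0) :
    Integrable (fun s : ℝ ↦ f s / ((s : ℂ) - k)) μ := by
  simp only [div_eq_mul_inv]
  exact hf.mul_bdd (Measurable.aestronglyMeasurable (by fun_prop))
    (.of_forall fun s ↦ norm_inv_ofReal_sub_le s hk)

theorem inv_sub_inv_eq_cauchyPDFReal (x s : ℝ) {ε : ℝ≥0} (hε : ε ≠ 0) :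
    ((s : ℂ) - (x + I * ε))⁻¹ - ((s : ℂ) - (x - I * ε))⁻¹ =
      2 * Real.pi * I * cauchyPDFReal x ε s := by
  have hε' : (ε : ℝ) ≠ 0 := NNReal.coe_ne_zero.mpr hε
  have above_ne : (s : ℂ) - (x + I * ε) ≠ 0 := fun h ↦ hε' (by simpa using congrArg im h)
  have below_ne : (s : ℂ) - (x - I * ε) ≠ 0 := fun h ↦ hε' (by simpa using congrArg im h)
  have mul_eq : ((s : ℂ) - (x + I * ε)) * (s - (x - I * ε)) = (s - x) ^ 2 + ε ^ 2 := by
    linear_combination -(ε : ℂ) ^ 2 * I_sq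
  have pi_ne : (Real.pi : ℂ) ≠ 0 := ofReal_ne_zero.mpr Real.pi_ne_zero
  rw [inv_sub_inv above_ne below_ne, mul_eq, cauchyPDFReal_def]
  push_cast
  field_simp
  ring

theorem cauchyTransform_sub_eq_integral_cauchyPDFReal (hf : Integrable f) (x : ℝ) {ε : ℝ≥0}
    (hε : ε ≠ 0) :
    cauchyTransform f (x + I * ε) - cauchyTransform f (x - I * ε) =
      ∫ s, cauchyPDFReal x ε s • f s := by
  have above := integrable_div_ofReal_sub hf (k := x + I * ε) (by simpa using hε)
  have below := integrable_div_ofReal_sub hf (k := x - I * ε) (by simpa using hε)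
  rw [cauchyTransform, cauchyTransform, ← mul_sub, ← integral_sub above below,
    ← integral_const_mul]
  congr 1 with s
  rw [div_eq_mul_inv (f s), div_eq_mul_inv (f s), ← mul_sub,
    inv_sub_inv_eq_cauchyPDFReal x s hε, real_smul]
  field_simp [Real.pi_ne_zero]

end CauchyKernel

section ApproximateIdentity

theorem tendsto_norm_mul_cauchyPDFReal_cobounded (γ : ℝ≥0) :
    Tendsto (fun t ↦ ‖t‖ * cauchyPDFReal 0 γ t) (cobounded ℝ) (𝓝 0) := by
  have bound_tendsto : Tendsto (fun t : ℝ ↦ Real.pi⁻¹ * γ * ‖t‖⁻¹) (cobounded ℝ) (𝓝 0) := by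
    simpa using (tendsto_norm_cobounded_atTop (E := ℝ)).inv_tendsto_atTop.const_mul (Real.pi⁻¹ * γ)
  refine squeeze_zero' (.of_forall fun t ↦ ?_) ?_ bound_tendsto
  · rw [cauchyPDFReal_def]
    positivity
  · filter_upwards [eventually_ne_cobounded 0] with t ht
    calc ‖t‖ * cauchyPDFReal 0 γ t
        = Real.pi⁻¹ * γ * (‖t‖ * (‖t‖ ^ 2 + γ ^ 2)⁻¹) := by
          rw [cauchyPDFReal_def, sub_zero, Real.norm_eq_abs, sq_abs]
          ring
      _ ≤ Real.pi⁻¹ * γ * (‖t‖ * (‖t‖ ^ 2)⁻¹) := by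
          gcongr
          exact le_add_of_nonneg_right (by positivity)
      _ = Real.pi⁻¹ * γ * ‖t‖⁻¹ := by field_simp

theorem inv_mul_cauchyPDFReal_inv_mul (x s : ℝ) (γ : ℝ≥0) :
    (γ : ℝ)⁻¹ * cauchyPDFReal 0 1 ((γ : ℝ)⁻¹ * (x - s)) = cauchyPDFReal x γ s := by
  rw [cauchyPDFReal_def', cauchyPDFReal_def', NNReal.coe_inv, NNReal.coe_inv, NNReal.coe_one]
  ring

theorem tendsto_integral_cauchyPDFReal_smul {E : Type*} [NormedAddCommGroup E] [NormedSpace ℝ E]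
    [CompleteSpace E] {g : ℝ → E} {x : ℝ} (hg : Integrable g) (hgx : ContinuousAt g x) :
    Tendsto (fun γ : ℝ≥0 ↦ ∫ s, cauchyPDFReal x γ s • g s) (𝓝[>] 0) (𝓝 (g x)) := by
  have rescaled := tendsto_integral_comp_smul_smul_of_integrable' (φ := cauchyPDFReal 0 1)
    (fun t ↦ (cauchyPDF_pos 0 one_ne_zero t).le) (integral_cauchyPDFReal_eq_one 0 one_ne_zero)
    (by simpa using tendsto_norm_mul_cauchyPDFReal_cobounded 1) hg hgx
  have inv_tendsto : Tendsto (fun γ : ℝ≥0 ↦ (γ : ℝ)⁻¹) (𝓝[>] 0) atTop :=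
    NNReal.tendsto_coe_atTop.mpr tendsto_inv_nhdsGT_zero
  simpa only [Function.comp_def, Module.finrank_self, pow_one, smul_eq_mul,
    inv_mul_cauchyPDFReal_inv_mul] using rescaled.comp inv_tendsto

end ApproximateIdentity

theorem cauchyTransform_jump_general {f : ℝ → ℂ} {x : ℝ} (hf : Integrable f)
    (hfx : ContinuousAt f x) :
    Tendsto
      (fun ε : ℝ => cauchyTransform f (x + I * ε) - cauchyTransform f (x - I * ε))
      (𝓝[>] (0 : ℝ)) (𝓝 (f x)) := by
  have toNNReal_tendsto : Tendsto Real.toNNReal (𝓝[>] 0) (𝓝[>] 0) := by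
    refine tendsto_nhdsWithin_iff.mpr ⟨?_, ?_⟩
    · simpa using (continuous_real_toNNReal.tendsto 0).mono_left nhdsWithin_le_nhds
    · filter_upwards [self_mem_nhdsWithin] with ε hε using Real.toNNReal_pos.mpr hε
  refine ((tendsto_integral_cauchyPDFReal_smul hf hfx).comp toNNReal_tendsto).congr' ?_
  filter_upwards [self_mem_nhdsWithin] with ε (hε : 0 < ε)
  lift ε to ℝ≥0 using hε.le
  simpa using (cauchyTransform_sub_eq_integral_cauchyPDFReal hf x
    (NNReal.coe_ne_zero.mp hε.ne')).symm

/-- Sokhotski–Plemelj jump: for Schwartz `f`, the jump of its Cauchy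
transform across the real axis recovers `f`. -/
theorem cauchyTransform_jump (f : SchwartzMap ℝ ℂ) (x : ℝ) :
    Tendsto
      (fun ε : ℝ =>
        cauchyTransform f (x + Complex.I * ε) - cauchyTransform f (x - Complex.I * ε))
      (𝓝[>] (0 : ℝ)) (𝓝 (f x)) :=
  cauchyTransform_jump_general f.integrable f.continuous.continuousAt
end

section
/- Let f : ℝ → ℂ be integrable and let F be its Cauchy transform. Then lim_{y → +∞} (i y) · F(i y) = −(1/(2πi)) ∫_ℝ f(s) ds; equivalently, −2πi · lim_{y → +∞} (i y) F(i y) = ∫_ℝ f(s) ds. -/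
open MeasureTheory Complex Filter Topology

/-!
For fixed `s`, the kernel `k / (s - k)` tends to `-1` as `k → ∞`. Since `|Im k| ≤ ‖s - k‖` for real
`s`, it is bounded by `‖k‖ / |Im k|` uniformly in `s`, hence by a constant as long as `k` stays in a
sector away from the real line. Dominated convergence, with a multiple of `‖f‖` as dominating
function, gives the limit. The imaginary axis is the narrowest such sector, `‖k‖ = |Im k|`.
-/

open Bornology

theorem tendsto_div_const_sub_cobounded {𝕜 : Type*} [NormedField 𝕜] (c : 𝕜) :
    Tendsto (fun k : 𝕜 => k / (c - k)) (cobounded 𝕜) (𝓝 (-1)) := by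
  have h : Tendsto (fun k : 𝕜 => (c * k⁻¹ - 1)⁻¹) (cobounded 𝕜) (𝓝 (c * 0 - 1)⁻¹) :=
    ((tendsto_inv₀_cobounded.const_mul c).sub_const 1).inv₀ (by simp)
  rw [mul_zero, zero_sub, inv_neg_one] at h
  refine h.congr' ?_
  filter_upwards [eventually_ne_cobounded (0 : 𝕜)] with k hk
  rw [← div_eq_mul_inv, div_sub_one hk, inv_div]

theorem norm_div_ofReal_sub_le {k : ℂ} (hk : k.im ≠ 0) (s : ℝ) :
    ‖k / (s - k)‖ ≤ ‖k‖ / |k.im| := by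
  have h : |k.im| ≤ ‖(s : ℂ) - k‖ := by simpa using abs_im_le_norm ((s : ℂ) - k)
  rw [norm_div]
  gcongr

/-- The filter of nontangential approach to infinity, relative to the real line: `k → ∞` inside
the double sector `‖k‖ ≤ C |Im k|`. The filter is trivial for `C < 1`. -/
noncomputable def nontangentialAtInfinity (C : ℝ) : Filter ℂ :=
  cobounded ℂ ⊓ 𝓟 {k | ‖k‖ ≤ C * |k.im|}

namespace nontangentialAtInfinity

instance (C : ℝ) : (nontangentialAtInfinity C).IsCountablyGenerated := by
  rw [nontangentialAtInfinity, ← comap_norm_atTop]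
  infer_instance

theorem le_cobounded (C : ℝ) : nontangentialAtInfinity C ≤ cobounded ℂ :=
  inf_le_left

theorem eventually_norm_le (C : ℝ) : ∀ᶠ k in nontangentialAtInfinity C, ‖k‖ ≤ C * |k.im| :=
  mem_inf_of_right (mem_principal_self _)

theorem eventually_im_ne_zero (C : ℝ) : ∀ᶠ k in nontangentialAtInfinity C, k.im ≠ 0 := by
  have hne : ∀ᶠ k in nontangentialAtInfinity C, k ≠ 0 :=
    (eventually_ne_cobounded 0).filter_mono (le_cobounded C)
  filter_upwards [hne, eventually_norm_le C] with k hk hle him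
  exact hk (norm_le_zero_iff.mp (by simpa [him] using hle))

end nontangentialAtInfinity

theorem tendsto_I_mul_ofReal_nontangentialAtInfinity :
    Tendsto (fun y : ℝ => I * y) atTop (nontangentialAtInfinity 1) := by
  refine tendsto_inf.mpr ⟨?_, tendsto_principal.mpr (.of_forall fun y => by simp)⟩
  rw [← tendsto_norm_atTop_iff_cobounded]
  simpa using tendsto_abs_atTop_atTop

theorem tendsto_integral_div_ofReal_sub_smul {E : Type*} [NormedAddCommGroup E] [NormedSpace ℂ E]
    {μ : Measure ℝ} {f : ℝ → E} (hf : Integrable f μ) (C : ℝ) :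
    Tendsto (fun k : ℂ => ∫ s : ℝ, (k / (s - k)) • f s ∂μ) (nontangentialAtInfinity C)
      (𝓝 (-∫ s, f s ∂μ)) := by
  rw [← integral_neg]
  refine tendsto_integral_filter_of_dominated_convergence (fun s => C * ‖f s‖) ?_ ?_
    (hf.norm.const_mul C) ?_
  · refine .of_forall fun k => AEStronglyMeasurable.smul ?_ hf.aestronglyMeasurable
    exact (measurable_ofReal.sub_const k).const_div k |>.aestronglyMeasurable
  · filter_upwards [nontangentialAtInfinity.eventually_norm_le C,
      nontangentialAtInfinity.eventually_im_ne_zero C] with k hk him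
    refine .of_forall fun s => ?_
    rw [norm_smul]
    gcongr
    exact (norm_div_ofReal_sub_le him s).trans ((div_le_iff₀ (abs_pos.mpr him)).mpr hk)
  · refine .of_forall fun s => ?_
    have h := (tendsto_div_const_sub_cobounded (s : ℂ)).mono_left
      (nontangentialAtInfinity.le_cobounded C)
    simpa using h.smul_const (f s)

theorem mul_cauchyTransform (f : ℝ → ℂ) (k : ℂ) :
    k * cauchyTransform f k =
      1 / (2 * Real.pi * I) * ∫ s : ℝ, (k / (s - k)) • f s := by
  rw [cauchyTransform, mul_left_comm, ← integral_const_mul]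
  simp only [smul_eq_mul, mul_div_left_comm, mul_comm]

theorem cauchyTransform_first_asymptotics_general {f : ℝ → ℂ} (hf : Integrable f) (C : ℝ) :
    Tendsto (fun k => k * cauchyTransform f k) (nontangentialAtInfinity C)
      (𝓝 (-(1 / (2 * Real.pi * I)) * ∫ s : ℝ, f s)) ∧
    Tendsto (fun k => -(2 * Real.pi * I) * (k * cauchyTransform f k)) (nontangentialAtInfinity C)
      (𝓝 (∫ s : ℝ, f s)) := by
  have first : Tendsto (fun k => k * cauchyTransform f k) (nontangentialAtInfinity C)
      (𝓝 (-(1 / (2 * Real.pi * I)) * ∫ s : ℝ, f s)) := by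
    simp only [mul_cauchyTransform, neg_mul_comm]
    exact (tendsto_integral_div_ofReal_sub_smul hf C).const_mul _
  refine ⟨first, ?_⟩
  have second := first.const_mul (-(2 * Real.pi * I))
  rwa [← mul_assoc, neg_mul_neg, mul_one_div_cancel two_pi_I_ne_zero, one_mul] at second

/-- first-order large-`k` asymptotics of the Cauchy transform along
the imaginary axis: `lim_{y→∞} (iy) F(iy) = -(1/(2πi)) ∫ f`, equivalently
`-2πi lim_{y→∞} (iy) F(iy) = ∫ f`. -/
theorem cauchyTransform_first_asymptotics (f : ℝ → ℂ) (hf : Integrable f) :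
    Tendsto (fun y : ℝ => (Complex.I * y) * cauchyTransform f (Complex.I * y))
      atTop (𝓝 (-(1 / (2 * Real.pi * Complex.I)) * ∫ s : ℝ, f s)) ∧
    Tendsto (fun y : ℝ =>
        (-(2 * Real.pi * Complex.I)) * ((Complex.I * y) * cauchyTransform f (Complex.I * y)))
      atTop (𝓝 (∫ s : ℝ, f s)) :=
  (cauchyTransform_first_asymptotics_general hf 1).imp
    (·.comp tendsto_I_mul_ofReal_nontangentialAtInfinity)
    (·.comp tendsto_I_mul_ofReal_nontangentialAtInfinity)
end

section
/- Let σ₃ be the 2×2 complex matrix diag(1, −1), let k ∈ ℂ be fixed, let Q : ℝ × ℝ → ℂ be smooth, and let Φ : ℝ × ℝ → Matrix (2×2, ℂ) be smooth with Φ(x,t) invertible for every (x,t). Suppose that for all (x,t) ∈ ℝ²: (i) −∂_x² Φ + 2 i k (∂_x Φ) σ₃ − Q(x,t) Φ = 0, and (ii) −∂_t Φ + 4 i k³ Φ σ₃ = (2 Q(x,t) − 4 k²) ( ∂_x Φ − i k Φ σ₃ ) − (∂_x Q)(x,t) Φ. Then Q satisfies the KdV equation: ∂_t Q + 6 Q ∂_x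 Q + ∂_x³ Q = 0 at every (x,t) ∈ ℝ². -/
open Matrix Complex

/-- The Pauli matrix σ₃ = diag(1, -1). -/
noncomputable def sigma3 : Matrix (Fin 2) (Fin 2) ℂ := !![1, 0; 0, -1]

/-- Entrywise partial derivative of a matrix-valued function of `(x,t)` in `x`. -/
noncomputable def matDx (Φ : ℝ → ℝ → Matrix (Fin 2) (Fin 2) ℂ) (x t : ℝ) :
    Matrix (Fin 2) (Fin 2) ℂ :=
  Matrix.of fun i j => deriv (fun ξ : ℝ => Φ ξ t i j) x

/-- Entrywise second partial derivative of a matrix-valued function in `x`. -/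
noncomputable def matDxx (Φ : ℝ → ℝ → Matrix (Fin 2) (Fin 2) ℂ) (x t : ℝ) :
    Matrix (Fin 2) (Fin 2) ℂ :=
  Matrix.of fun i j => iteratedDeriv 2 (fun ξ : ℝ => Φ ξ t i j) x

/-- Entrywise partial derivative of a matrix-valued function of `(x,t)` in `t`. -/
noncomputable def matDt (Φ : ℝ → ℝ → Matrix (Fin 2) (Fin 2) ℂ) (x t : ℝ) :
    Matrix (Fin 2) (Fin 2) ℂ :=
  Matrix.of fun i j => deriv (fun τ : ℝ => Φ x τ i j) t

/-!
The `(i, j)` entry `f` of `Φ` satisfies a scalar Lax pair with constant `a = ± i k`, the sign being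
the `j`-th diagonal entry of `σ₃`: `f_xx = 2 a f_x - q f`, and `f_t` is a combination of `f_x` and
`f`. The first equation reduces every `x`-derivative of `f_t` to such a combination. In the identity
`(f_t)_xx = (f_xx)_t` the coefficients of `f_x` cancel, and those of `f` leave
`(q_t + 6 q q_x + q_xxx) f = 0`. Where `Φ ≠ 0` some entry can be divided out.
-/

open scoped ContDiff

section DifferentialAlgebra

variable {R A : Type*} [CommRing R] [CommRing A] [Algebra R A]

/-- The left-hand side `q_t + 6 q q_x + q_xxx` of the KdV equation in an algebra with derivations
`X = ∂_x` and `T = ∂_t`. -/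
def kdvOperator (X T : Derivation R A A) (q : A) : A :=
  T q + 6 * q * X q + X (X (X q))

theorem derivation_ofNat (D : Derivation R A A) (n : ℕ) [n.AtLeastTwo] : D ofNat(n) = 0 :=
  D.map_natCast n

theorem derivation_combination_of_second_order {X : Derivation R A A} {a q f : A}
    (hX : X (X f) = 2 * a * X f - q * f) (α β : A) :
    X (α * X f + β * f) = (X α + 2 * a * α + β) * X f + (X β - α * q) * f := by
  simp only [map_add, X.leibniz, hX, smul_eq_mul]
  ring

theorem laxPair_mixed_derivative {X T : Derivation R A A} {a q f : A} (hXa : X a = 0)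
    (hX : X (X f) = 2 * a * X f - q * f)
    (hT : T f = (-2 * q - 4 * a ^ 2) * X f + (2 * a * q + X q) * f) :
    X (T f) = (-X q - 2 * a * q - 8 * a ^ 3) * X f
      + (X (X q) + 2 * a * X q + 2 * q ^ 2 + 4 * a ^ 2 * q) * f := by
  rw [hT, derivation_combination_of_second_order hX]
  simp only [map_sub, map_add, map_neg, X.leibniz, X.leibniz_pow, derivation_ofNat, hXa,
    smul_eq_mul]
  ring

theorem laxPair_mixed_second_derivative {X T : Derivation R A A} {a q f : A} (hXa : X a = 0)
    (hX : X (X f) = 2 * a * X f - q * f)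
    (hT : T f = (-2 * q - 4 * a ^ 2) * X f + (2 * a * q + X q) * f) :
    X (X (T f)) = (-2 * a * X q - 16 * a ^ 4 + 2 * q ^ 2) * X f
      + (X (X (X q)) + 2 * a * X (X q) + 5 * q * X q + 4 * a ^ 2 * X q + 2 * a * q ^ 2
        + 8 * a ^ 3 * q) * f := by
  rw [laxPair_mixed_derivative hXa hX hT, derivation_combination_of_second_order hX]
  simp only [map_sub, map_add, map_neg, X.leibniz, X.leibniz_pow, derivation_ofNat, hXa,
    smul_eq_mul, nsmul_eq_mul]
  ring

theorem kdvOperator_mul_eq_zero_of_laxPair {X T : Derivation R A A} {a q f : A}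
    (hXT : ∀ g, X (T g) = T (X g)) (hXa : X a = 0) (hTa : T a = 0)
    (hX : X (X f) = 2 * a * X f - q * f)
    (hT : T f = (-2 * q - 4 * a ^ 2) * X f + (2 * a * q + X q) * f) :
    kdvOperator X T q * f = 0 := by
  have hcross : X (X (T f)) = T (X (X f)) := by rw [hXT, hXT]
  have hTXXf : T (X (X f)) = 2 * a * X (T f) - T q * f - q * T f := by
    rw [hX, hXT]
    simp only [map_sub, T.leibniz, derivation_ofNat, hTa, smul_eq_mul]
    ring
  unfold kdvOperator
  linear_combination hcross - laxPair_mixed_second_derivative hXa hX hT + hTXXf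
    + 2 * a * laxPair_mixed_derivative hXa hX hT - q * hT

end DifferentialAlgebra

section SmoothFunctions

variable (E 𝔸 : Type*) [NormedAddCommGroup E] [NormedSpace ℝ E]
  [NormedCommRing 𝔸] [NormedAlgebra ℝ 𝔸]

/-- The algebra of smooth functions on a real normed space `E` with values in a commutative normed
algebra `𝔸`. Its scalars are `𝔸` itself, so that `algebraMap` gives the constant functions. -/
def smoothFunctions : Subalgebra 𝔸 (E → 𝔸) where
  carrier := {f | ContDiff ℝ ∞ f}
  mul_mem' hf hg := by
    rw [Set.mem_ofPred_eq] at hf hg ⊢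
    exact hf.mul hg
  add_mem' hf hg := by
    rw [Set.mem_ofPred_eq] at hf hg ⊢
    exact hf.add hg
  algebraMap_mem' c := (contDiff_const : ContDiff ℝ ∞ fun _ : E => c)

variable {E 𝔸}

theorem smoothFunctions.contDiff (f : smoothFunctions E 𝔸) : ContDiff ℝ ∞ f.1 :=
  f.2

theorem smoothFunctions.differentiableAt (f : smoothFunctions E 𝔸) (p : E) :
    DifferentiableAt ℝ f.1 p :=
  (contDiff f).differentiable (by simp) p

theorem smoothFunctions.contDiff_fderiv (f : smoothFunctions E 𝔸) : ContDiff ℝ ∞ (fderiv ℝ f.1) :=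
  (contDiff f).fderiv_right (by simp)

open smoothFunctions

variable (𝔸) in
/-- The directional derivative along `v`, as a derivation of the algebra of smooth functions. -/
noncomputable def dirDeriv (v : E) :
    Derivation 𝔸 (smoothFunctions E 𝔸) (smoothFunctions E 𝔸) :=
  Derivation.mk'
    { toFun := fun f => ⟨fun p => fderiv ℝ f.1 p v, (contDiff_fderiv f).clm_apply contDiff_const⟩
      map_add' := fun f g => Subtype.ext <| funext fun p => by
        simp [fderiv_add (differentiableAt f p) (differentiableAt g p)]
      map_smul' := fun c f => Subtype.ext <| funext fun p => by
        simp [fderiv_const_smul (differentiableAt f p)] }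
    fun f g => Subtype.ext <| funext fun p => by
      simp [fderiv_mul (differentiableAt f p) (differentiableAt g p)]

theorem dirDeriv_dirDeriv_apply (v w : E) (f : smoothFunctions E 𝔸) (p : E) :
    (dirDeriv 𝔸 v (dirDeriv 𝔸 w f)).1 p = fderiv ℝ (fderiv ℝ f.1) p v w := by
  have hd : DifferentiableAt ℝ (fderiv ℝ f.1) p :=
    (contDiff_fderiv f).differentiable (by simp) p
  change fderiv ℝ (fun z => fderiv ℝ f.1 z w) p v = _
  simp [fderiv_clm_apply hd (differentiableAt_const w)]

theorem dirDeriv_comm (v w : E) (f : smoothFunctions E 𝔸) :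
    dirDeriv 𝔸 v (dirDeriv 𝔸 w f) = dirDeriv 𝔸 w (dirDeriv 𝔸 v f) := by
  ext p
  have hsymm : IsSymmSndFDerivAt ℝ f.1 p :=
    (contDiff f).contDiffAt.isSymmSndFDerivAt
      (by simpa using WithTop.coe_le_coe.mpr (le_top (a := (2 : ℕ∞))))
  rw [dirDeriv_dirDeriv_apply, dirDeriv_dirDeriv_apply, hsymm.eq]

theorem deriv_fst_eq_dirDeriv (f : smoothFunctions (ℝ × E) 𝔸) (x : ℝ) (y : E) :
    deriv (fun ξ => f.1 (ξ, y)) x = (dirDeriv 𝔸 (1, 0) f).1 (x, y) :=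
  ((differentiableAt f (x, y)).hasFDerivAt.comp_hasDerivAt x
    ((hasDerivAt_id x).prodMk (hasDerivAt_const x y))).deriv

theorem deriv_snd_eq_dirDeriv (f : smoothFunctions (E × ℝ) 𝔸) (x : E) (t : ℝ) :
    deriv (fun τ => f.1 (x, τ)) t = (dirDeriv 𝔸 (0, 1) f).1 (x, t) :=
  ((differentiableAt f (x, t)).hasFDerivAt.comp_hasDerivAt t
    ((hasDerivAt_const t x).prodMk (hasDerivAt_id t))).deriv

theorem iteratedDeriv_fst_eq_iterate_dirDeriv (n : ℕ) (f : smoothFunctions (ℝ × E) 𝔸) (x : ℝ)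
    (y : E) :
    iteratedDeriv n (fun ξ => f.1 (ξ, y)) x = ((dirDeriv 𝔸 ((1 : ℝ), (0 : E)))^[n] f).1 (x, y) := by
  induction n generalizing f with
  | zero => simp
  | succ n ih =>
    rw [iteratedDeriv_succ', funext fun x => deriv_fst_eq_dirDeriv f x y, ih,
      Function.iterate_succ_apply]

theorem kdv_mul_eq_zero_of_scalar_laxPair {a : 𝔸} {q f : ℝ → ℝ → 𝔸}
    (hq : ContDiff ℝ ∞ fun p : ℝ × ℝ => q p.1 p.2)
    (hf : ContDiff ℝ ∞ fun p : ℝ × ℝ => f p.1 p.2)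
    (hX : ∀ x t, iteratedDeriv 2 (fun ξ => f ξ t) x
      = 2 * a * deriv (fun ξ => f ξ t) x - q x t * f x t)
    (hT : ∀ x t, deriv (fun τ => f x τ) t
      = (-2 * q x t - 4 * a ^ 2) * deriv (fun ξ => f ξ t) x
        + (2 * a * q x t + deriv (fun ξ => q ξ t) x) * f x t) (x t : ℝ) :
    (deriv (fun τ => q x τ) t + 6 * q x t * deriv (fun ξ => q ξ t) x
      + iteratedDeriv 3 (fun ξ => q ξ t) x) * f x t = 0 := by
  let qS : smoothFunctions (ℝ × ℝ) 𝔸 := ⟨fun p => q p.1 p.2, hq⟩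
  let fS : smoothFunctions (ℝ × ℝ) 𝔸 := ⟨fun p => f p.1 p.2, hf⟩
  let X := dirDeriv 𝔸 ((1, 0) : ℝ × ℝ)
  let T := dirDeriv 𝔸 ((0, 1) : ℝ × ℝ)
  have hXS : X (X fS) = 2 * algebraMap 𝔸 _ a * X fS - qS * fS := by
    ext ⟨y, s⟩
    have h := hX y s
    rw [iteratedDeriv_fst_eq_iterate_dirDeriv 2 fS, deriv_fst_eq_dirDeriv fS] at h
    exact h
  have hTS : T fS = (-2 * qS - 4 * algebraMap 𝔸 _ a ^ 2) * X fS
      + (2 * algebraMap 𝔸 _ a * qS + X qS) * fS := by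
    ext ⟨y, s⟩
    have h := hT y s
    rw [deriv_snd_eq_dirDeriv fS, deriv_fst_eq_dirDeriv fS, deriv_fst_eq_dirDeriv qS] at h
    exact h
  have hkdv : kdvOperator X T qS * fS = 0 :=
    kdvOperator_mul_eq_zero_of_laxPair (dirDeriv_comm _ _) (X.map_algebraMap a)
      (T.map_algebraMap a) hXS hTS
  rw [deriv_snd_eq_dirDeriv qS, deriv_fst_eq_dirDeriv qS,
    iteratedDeriv_fst_eq_iterate_dirDeriv 3 qS]
  exact congrFun (congrArg Subtype.val hkdv) (x, t)

end SmoothFunctions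

section MatrixEntries

theorem sigma3_eq_diagonal : sigma3 = diagonal ![1, -1] := by
  ext i j
  fin_cases i <;> fin_cases j <;> simp [sigma3]

theorem mul_sigma3_apply (M : Matrix (Fin 2) (Fin 2) ℂ) (i j : Fin 2) :
    (M * sigma3) i j = M i j * ![1, -1] j := by
  rw [sigma3_eq_diagonal, mul_diagonal]

theorem sigma3_sign_sq (j : Fin 2) : (![1, -1] : Fin 2 → ℂ) j ^ 2 = 1 := by
  fin_cases j <;> simp

variable {k q q' : ℂ} {Φ : ℝ → ℝ → Matrix (Fin 2) (Fin 2) ℂ} {x t : ℝ}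

theorem iteratedDeriv_entry_of_spatial_equation
    (h : -matDxx Φ x t + (2 * I * k) • (matDx Φ x t * sigma3) - q • Φ x t = 0) (i j : Fin 2) :
    iteratedDeriv 2 (fun ξ => Φ ξ t i j) x
      = 2 * (I * k * ![1, -1] j) * deriv (fun ξ => Φ ξ t i j) x - q * Φ x t i j := by
  have hij := congrFun (congrFun h i) j
  simp only [Matrix.add_apply, Matrix.sub_apply, Matrix.neg_apply, Matrix.smul_apply,
    Matrix.zero_apply, mul_sigma3_apply, matDxx, matDx, of_apply, smul_eq_mul] at hij
  linear_combination -hij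

theorem deriv_entry_of_temporal_equation
    (h : -matDt Φ x t + (4 * I * k ^ 3) • (Φ x t * sigma3)
      = (2 * q - 4 * k ^ 2) • (matDx Φ x t - (I * k) • (Φ x t * sigma3)) - q' • Φ x t)
    (i j : Fin 2) :
    deriv (fun τ => Φ x τ i j) t
      = (-2 * q - 4 * (I * k * ![1, -1] j) ^ 2) * deriv (fun ξ => Φ ξ t i j) x
        + (2 * (I * k * ![1, -1] j) * q + q') * Φ x t i j := by
  have hij := congrFun (congrFun h i) j
  simp only [Matrix.add_apply, Matrix.sub_apply, Matrix.neg_apply, Matrix.smul_apply,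
    mul_sigma3_apply, matDt, matDx, of_apply, smul_eq_mul] at hij
  rw [mul_pow, mul_pow, I_sq, sigma3_sign_sq]
  linear_combination -hij

end MatrixEntries

theorem dressing_compatibility_kdv_general (k : ℂ) (Q : ℝ → ℝ → ℂ)
    (Φ : ℝ → ℝ → Matrix (Fin 2) (Fin 2) ℂ)
    (hQ : ContDiff ℝ (⊤ : ℕ∞) (fun p : ℝ × ℝ => Q p.1 p.2))
    (hΦ : ∀ i j : Fin 2, ContDiff ℝ (⊤ : ℕ∞) (fun p : ℝ × ℝ => Φ p.1 p.2 i j))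
    (heq1 : ∀ x t : ℝ,
      -matDxx Φ x t + (2 * Complex.I * k) • (matDx Φ x t * sigma3) - Q x t • Φ x t = 0)
    (heq2 : ∀ x t : ℝ,
      -matDt Φ x t + (4 * Complex.I * k ^ 3) • (Φ x t * sigma3)
        = (2 * Q x t - 4 * k ^ 2) •
            (matDx Φ x t - (Complex.I * k) • (Φ x t * sigma3))
          - (deriv (fun ξ : ℝ => Q ξ t) x) • Φ x t) :
    ∀ x t : ℝ, Φ x t ≠ 0 →
      deriv (fun τ : ℝ => Q x τ) t
        + 6 * Q x t * deriv (fun ξ : ℝ => Q ξ t) x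
        + iteratedDeriv 3 (fun ξ : ℝ => Q ξ t) x = 0 := by
  intro x t hne
  obtain ⟨i, j, hij⟩ : ∃ i j, Φ x t i j ≠ 0 := by
    by_contra! hzero
    exact hne (Matrix.ext hzero)
  have hkdv := kdv_mul_eq_zero_of_scalar_laxPair hQ (hΦ i j)
    (fun y s => iteratedDeriv_entry_of_spatial_equation (heq1 y s) i j)
    (fun y s => deriv_entry_of_temporal_equation (heq2 y s) i j) x t
  exact (mul_eq_zero.mp hkdv).resolve_right hij

/-- dressing method compatibility: if `Φ` is a smooth, everywhere
invertible matrix solution of the Lax pair (i)–(ii) with potential `Q`, then `Q`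
solves the KdV equation `Q_t + 6 Q Q_x + Q_xxx = 0`. -/
theorem dressing_compatibility_kdv (k : ℂ) (Q : ℝ → ℝ → ℂ)
    (Φ : ℝ → ℝ → Matrix (Fin 2) (Fin 2) ℂ)
    (hQ : ContDiff ℝ (⊤ : ℕ∞) (fun p : ℝ × ℝ => Q p.1 p.2))
    (hΦ : ∀ i j : Fin 2, ContDiff ℝ (⊤ : ℕ∞) (fun p : ℝ × ℝ => Φ p.1 p.2 i j))
    (hinv : ∀ x t : ℝ, IsUnit (Φ x t))
    (heq1 : ∀ x t : ℝ,
      -matDxx Φ x t + (2 * Complex.I * k) • (matDx Φ x t * sigma3) - Q x t • Φ x t = 0)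
    (heq2 : ∀ x t : ℝ,
      -matDt Φ x t + (4 * Complex.I * k ^ 3) • (Φ x t * sigma3)
        = (2 * Q x t - 4 * k ^ 2) •
            (matDx Φ x t - (Complex.I * k) • (Φ x t * sigma3))
          - (deriv (fun ξ : ℝ => Q ξ t) x) • Φ x t) :
    ∀ x t : ℝ,
      deriv (fun τ : ℝ => Q x τ) t
        + 6 * Q x t * deriv (fun ξ : ℝ => Q ξ t) x
        + iteratedDeriv 3 (fun ξ : ℝ => Q ξ t) x = 0 := by
  intro x t
  exact dressing_compatibility_kdv_general k Q Φ hQ hΦ heq1 heq2 x t (hinv x t).ne_zero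
end
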